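/- arXiv:2501.01839 — 2 statements merged into one kernel-verified Lean document; each statement's English description precedes it below -/
import Mathlib

section
/- Let n ≥ 1, let S be an n×n Hermitian positive definite complex matrix, let A be an n×n complex matrix with Re(⟨Aη, η⟩) = 0 for all η ∈ ℂⁿ, let κ > 0, and let B be an n×n complex matrix with Re(⟨Bη, η⟩) ≥ κ |Bη|² for all η ∈ ℂⁿ. Let a, b be real numbers, and assume that the pair (S⁻¹A, S⁻¹B) satisfies the (SK) condition. Then there exist constants c > 0 and C > 0 such that for every ρ > 0, every differentiable function v : [0, ∞) → ℂⁿ satisfying S v'(t) + (ρᵃ A + ρᵇ B) v(t) = 0 for all t ≥ 0 obeys |v(t)| ≤ C · exp(−c t · min(ρᵇ/κ, κ ρ^{2a-b})) · |v(0)| for all t ≥ 0. -/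
open Matrix ComplexOrder

/-- The Shizuta–Kawashima condition: the only vector `φ` with `M φ = 0` and
`λ φ + N φ = 0` for some `λ ∈ ℂ` is `φ = 0`. -/
def SKCondition {m : Type*} [Fintype m] (N M : Matrix m m ℂ) : Prop :=
  ∀ (φ : m → ℂ) (l : ℂ), M.mulVec φ = 0 → l • φ + N.mulVec φ = 0 → φ = 0


lemma sd_diag {n : ℕ} (S A : Matrix (Fin n) (Fin n) ℂ) (hS : S.PosDef)
    (hA : ∀ η : Fin n → ℂ, (star η ⬝ᵥ A.mulVec η).re = 0) :
    ∃ (W : Matrix (Fin n) (Fin n) ℂ) (l : Fin n → ℝ), IsUnit W ∧ S = Wᴴ * W ∧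
      A = Wᴴ * diagonal (fun j => -Complex.I * (l j : ℂ)) * W := by
  have hskew : Aᴴ = -A := by
    have h0 : ∀ x, star x ⬝ᵥ (A + Aᴴ) *ᵥ x = 0 := by
      intro x
      have e : star x ⬝ᵥ Aᴴ *ᵥ x = star (star x ⬝ᵥ A *ᵥ x) := by
        rw [← star_dotProduct, star_mulVec, dotProduct_mulVec]
      rw [add_mulVec, dotProduct_add, e]
      apply Complex.ext <;> simp [hA x]
    have hps : (A + Aᴴ).PosSemidef := by
      refine PosSemidef.of_dotProduct_mulVec_nonneg ?_ ?_
      · simp [IsHermitian, add_comm]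
      · intro x; rw [h0]
    have : A + Aᴴ = 0 := by
      ext i j
      have := (hps.dotProduct_mulVec_zero_iff (Pi.single j 1)).1 (h0 _)
      simpa using congrFun this i
    exact (neg_eq_of_add_eq_zero_right this).symm
  obtain ⟨R, hR, hSR⟩ : ∃ R : Matrix (Fin n) (Fin n) ℂ, IsUnit R ∧ S = Rᴴ * R := by
    have hs := hS.isHermitian.spectral_theorem
    rw [Unitary.conjStarAlgAut_apply] at hs
    set V : Matrix (Fin n) (Fin n) ℂ := hS.isHermitian.eigenvectorUnitary.1 with hV
    have key : S = (diagonal (fun j => ((Real.sqrt (hS.isHermitian.eigenvalues j) : ℝ) : ℂ)) * Vᴴ)ᴴ *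
      (diagonal (fun j => ((Real.sqrt (hS.isHermitian.eigenvalues j) : ℝ) : ℂ)) * Vᴴ) := by
      conv_lhs => rw [hs]
      rw [conjTranspose_mul, conjTranspose_conjTranspose, diagonal_conjTranspose, Matrix.mul_assoc,
        Matrix.mul_assoc, ← Matrix.mul_assoc (diagonal _) (diagonal _), diagonal_mul_diagonal]
      congr 3
      ext j
      simp only [Function.comp, Pi.star_apply, RCLike.star_def, Complex.conj_ofReal]
      rw [← Complex.ofReal_mul, Real.mul_self_sqrt (hS.eigenvalues_pos j).le]; rfl
    refine ⟨_, ?_, key⟩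
    have hu := hS.isUnit
    rw [key] at hu
    exact isUnit_of_mul_isUnit_right hu
  have hRd := (Matrix.isUnit_iff_isUnit_det _).1 hR
  have hRd' : IsUnit Rᴴ.det := by rw [det_conjTranspose]; exact hRd.star
  have hH : (Complex.I • ((R⁻¹)ᴴ * A * R⁻¹)).IsHermitian := by
    simp [IsHermitian, conjTranspose_smul, conjTranspose_mul, hskew, Matrix.mul_assoc]
  have hs := hH.spectral_theorem
  rw [Unitary.conjStarAlgAut_apply] at hs
  set V : Matrix (Fin n) (Fin n) ℂ := hH.eigenvectorUnitary.1 with hV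
  have hVV : V * Vᴴ = 1 := Unitary.coe_mul_star_self hH.eigenvectorUnitary
  have hVV' : Vᴴ * V = 1 := Unitary.coe_star_mul_self hH.eigenvectorUnitary
  refine ⟨Vᴴ * R, hH.eigenvalues, ?_, ?_, ?_⟩
  · refine IsUnit.mul ?_ hR
    exact IsUnit.of_mul_eq_one _ hVV'
  · rw [hSR, conjTranspose_mul, conjTranspose_conjTranspose, Matrix.mul_assoc,
      ← Matrix.mul_assoc V, hVV, Matrix.one_mul]
  · have e1 : A = Rᴴ * ((R⁻¹)ᴴ * A * R⁻¹) * R := by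
      rw [conjTranspose_nonsing_inv, Matrix.mul_assoc, Matrix.mul_assoc, Matrix.mul_assoc,
        nonsing_inv_mul _ hRd, ← Matrix.mul_assoc, mul_nonsing_inv _ hRd']
      simp
    have e2 : (R⁻¹)ᴴ * A * R⁻¹ = V * diagonal (fun j => -Complex.I * (hH.eigenvalues j : ℂ)) * Vᴴ := by
      have : (R⁻¹)ᴴ * A * R⁻¹ = (-Complex.I) • (Complex.I • ((R⁻¹)ᴴ * A * R⁻¹)) := by
        rw [smul_smul]; simp
      refine (this.trans (congrArg (fun X => (-Complex.I) • X) hs)).trans ?_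
      clear this
      have : diagonal (fun j => -Complex.I * (hH.eigenvalues j : ℂ)) = (-Complex.I) • diagonal (RCLike.ofReal ∘ hH.eigenvalues) := by
        rw [← diagonal_smul]; rfl
      rw [this]
      simp only [Matrix.mul_smul, Matrix.smul_mul]
      rfl
    conv_lhs => rw [e1, e2]
    simp [conjTranspose_mul, Matrix.mul_assoc]

lemma sk_diag {n : ℕ} (G : Matrix (Fin n) (Fin n) ℂ) (l : Fin n → ℝ)
    (h : ∀ (φ : Fin n → ℂ) (m : ℝ), G *ᵥ φ = 0 → (∀ j, φ j ≠ 0 → l j = m) → φ = 0) :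
    ∃ P : Matrix (Fin n) (Fin n) ℂ, P.IsHermitian ∧ ∀ w : Fin n → ℂ, w ≠ 0 →
      0 < (2 * (star w ⬝ᵥ (P * diagonal (fun j => -Complex.I * (l j : ℂ))) *ᵥ w)
        + star (G *ᵥ w) ⬝ᵥ G *ᵥ w).re := by
  set T := Gᴴ * G with hT
  have hTh : ∀ j k, star (T j k) = T k j := fun j k =>
    (isHermitian_conjTranspose_mul_self G).apply k j
  have hGT : ∀ w, star (G *ᵥ w) ⬝ᵥ G *ᵥ w = ∑ j, ∑ k, star (w j) * T j k * w k := by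
    intro w
    rw [star_mulVec, ← dotProduct_mulVec, mulVec_mulVec, ← hT]
    simp [dotProduct, mulVec, Finset.mul_sum, mul_assoc]
  let P : Matrix (Fin n) (Fin n) ℂ := fun j k => Complex.I * T j k / ((l j : ℂ) - l k)
  have hP : ∀ j k, star (P j k) = P k j := by
    intro j k
    simp only [P, star_div₀, star_mul', hTh, star_sub]
    simp only [RCLike.star_def, Complex.conj_I, Complex.conj_ofReal]
    rw [← neg_sub, div_neg, neg_mul, neg_div, neg_neg]
  refine ⟨P, ?_, ?_⟩
  · ext j k; exact hP k j
  intro w hw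
  let ww : ℝ → Fin n → ℂ := fun m j => if l j = m then w j else 0
  have hz : star w ⬝ᵥ (P * diagonal (fun j => -Complex.I * (l j : ℂ))) *ᵥ w
      = ∑ j, ∑ k, star (w j) * P j k * (-Complex.I * l k) * w k := by
    simp [dotProduct, mulVec, Finset.mul_sum, mul_assoc]
  have hz' : star (star w ⬝ᵥ (P * diagonal (fun j => -Complex.I * (l j : ℂ))) *ᵥ w)
      = ∑ j, ∑ k, star (w j) * P j k * (Complex.I * l j) * w k := by
    rw [hz, star_sum, Finset.sum_congr rfl (fun j _ => star_sum _ _), Finset.sum_comm]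
    refine Finset.sum_congr rfl fun j _ => Finset.sum_congr rfl fun k _ => ?_
    simp only [star_mul', hP, star_star, star_neg]
    simp only [RCLike.star_def, Complex.conj_I, Complex.conj_ofReal]
    ring
  have hre : (2 * (star w ⬝ᵥ (P * diagonal (fun j => -Complex.I * (l j : ℂ))) *ᵥ w)
        + star (G *ᵥ w) ⬝ᵥ G *ᵥ w).re
      = (∑ j, ∑ k, if l j = l k then star (w j) * T j k * w k else 0).re := by
    have : ∑ j, ∑ k, (if l j = l k then star (w j) * T j k * w k else 0) =
      (star w ⬝ᵥ (P * diagonal (fun j => -Complex.I * (l j : ℂ))) *ᵥ w) +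
      star (star w ⬝ᵥ (P * diagonal (fun j => -Complex.I * (l j : ℂ))) *ᵥ w) +
      star (G *ᵥ w) ⬝ᵥ G *ᵥ w := by
      rw [hz', hz, hGT]
      simp only [← Finset.sum_add_distrib]
      refine Finset.sum_congr rfl fun j _ => Finset.sum_congr rfl fun k _ => ?_
      split_ifs with e
      · simp [P, e]
      · have : (l j : ℂ) - l k ≠ 0 := by
          rw [sub_ne_zero]; exact_mod_cast e
        simp only [P]
        field_simp
        linear_combination (-star (w j) * T j k * w k * (l j - l k)) * Complex.I_sq
    rw [this]
    simp; ring
  have hsum : (∑ j, ∑ k, if l j = l k then star (w j) * T j k * w k else 0)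
      = ∑ m ∈ Finset.univ.image l, star (G *ᵥ ww m) ⬝ᵥ G *ᵥ ww m := by
    simp only [hGT]
    conv_rhs => rw [Finset.sum_comm]
    refine Finset.sum_congr rfl fun j _ => ?_
    conv_rhs => rw [Finset.sum_comm]
    refine Finset.sum_congr rfl fun k _ => ?_
    rw [Finset.sum_eq_single (l j)]
    · by_cases e : l j = l k
      · simp [ww, e]
      · have : l k ≠ l j := fun h => e h.symm
        simp [ww, e, this]
    · intro m _ hm
      simp [ww, hm.symm]
    · simp
  rw [hre, hsum, Complex.re_sum]
  have hnn : ∀ m, 0 ≤ (star (G *ᵥ ww m) ⬝ᵥ G *ᵥ ww m).re := fun m =>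
    (Complex.le_def.1 (dotProduct_star_self_nonneg (G *ᵥ ww m))).1
  by_contra hcon
  have h0 := le_antisymm (not_lt.1 hcon) (Finset.sum_nonneg fun m _ => hnn m)
  rw [Finset.sum_eq_zero_iff_of_nonneg (fun m _ => hnn m)] at h0
  apply hw
  ext j
  have h1 := h0 (l j) (by simp)
  have h2 : star (G *ᵥ ww (l j)) ⬝ᵥ G *ᵥ ww (l j) = 0 := by
    apply Complex.ext
    · exact h1
    · exact (Complex.le_def.1 (dotProduct_star_self_nonneg (G *ᵥ ww (l j)))).2.symm
  have h3 := h (ww (l j)) (l j) (dotProduct_star_self_eq_zero.1 h2) (by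
    intro k hk; by_contra hne; simp [ww, hne] at hk)
  have := congrFun h3 j
  simpa [ww] using this

lemma sk_comp {n : ℕ} (S A B : Matrix (Fin n) (Fin n) ℂ) (hS : S.PosDef)
    (hA : ∀ η : Fin n → ℂ, (star η ⬝ᵥ A.mulVec η).re = 0)
    (hSK : SKCondition (S⁻¹ * A) (S⁻¹ * B)) :
    ∃ P : Matrix (Fin n) (Fin n) ℂ, P.IsHermitian ∧ ∀ v : Fin n → ℂ, v ≠ 0 →
      0 < (2 * (star v ⬝ᵥ (P * (S⁻¹ * A)) *ᵥ v) + star (B *ᵥ v) ⬝ᵥ B *ᵥ v).re := by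
  obtain ⟨W, l, hW, hSW, hAW⟩ := sd_diag S A hS hA
  have hWd := (Matrix.isUnit_iff_isUnit_det _).1 hW
  have hWd' : IsUnit Wᴴ.det := by rw [det_conjTranspose]; exact hWd.star
  have hN : S⁻¹ * A = W⁻¹ * diagonal (fun j => -Complex.I * (l j : ℂ)) * W := by
    rw [hSW, hAW, Matrix.mul_inv_rev, Matrix.mul_assoc, Matrix.mul_assoc (Wᴴ),
      ← Matrix.mul_assoc (Wᴴ)⁻¹, nonsing_inv_mul _ hWd', Matrix.one_mul, Matrix.mul_assoc]
  obtain ⟨P, hP, hpos⟩ := sk_diag (B * W⁻¹) l (by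
    intro φ m h1 h2
    have h3 := hSK (W⁻¹ *ᵥ φ) (Complex.I * m) (by
      rw [mulVec_mulVec, Matrix.mul_assoc, ← mulVec_mulVec, h1, mulVec_zero]) (by
      have : diagonal (fun j => -Complex.I * (l j : ℂ)) *ᵥ φ = (-(Complex.I * m)) • φ := by
        ext j
        rw [mulVec_diagonal]
        by_cases hj : φ j = 0
        · simp [hj]
        · simp [h2 j hj]
      rw [hN, ← mulVec_mulVec, mulVec_mulVec _ W, mul_nonsing_inv _ hWd, one_mulVec,
        ← mulVec_mulVec, this, mulVec_smul, neg_smul, add_neg_cancel])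
    have : W *ᵥ (W⁻¹ *ᵥ φ) = 0 := by rw [h3, mulVec_zero]
    simpa [mulVec_mulVec, mul_nonsing_inv _ hWd] using this)
  refine ⟨Wᴴ * P * W, ?_, ?_⟩
  · exact isHermitian_conjTranspose_mul_mul W hP
  intro v hv
  have hw : W *ᵥ v ≠ 0 := by
    intro h0
    apply hv
    have : W⁻¹ *ᵥ (W *ᵥ v) = 0 := by rw [h0, mulVec_zero]
    simpa [mulVec_mulVec, nonsing_inv_mul _ hWd] using this
  have := hpos _ hw
  convert this using 4
  · rw [hN, star_mulVec, ← dotProduct_mulVec, mulVec_mulVec, mulVec_mulVec]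
    congr 2
    rw [Matrix.mul_assoc, Matrix.mul_assoc W⁻¹, ← Matrix.mul_assoc W, mul_nonsing_inv _ hWd]
    simp only [Matrix.one_mul, Matrix.mul_assoc]
  · rw [mulVec_mulVec, Matrix.mul_assoc, nonsing_inv_mul _ hWd, Matrix.mul_one]
  · rw [mulVec_mulVec, Matrix.mul_assoc, nonsing_inv_mul _ hWd, Matrix.mul_one]

lemma form_bound {n : ℕ} (M : Matrix (Fin n) (Fin n) ℂ) :
    ∃ K > 0, ∀ u v : Fin n → ℂ, |(star u ⬝ᵥ M *ᵥ v).re| ≤ K * ‖u‖ * ‖v‖ := by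
  refine ⟨(∑ j, ∑ k, ‖M j k‖) + 1, by positivity, fun u v => ?_⟩
  refine (Complex.abs_re_le_norm _).trans ?_
  have h : ‖star u ⬝ᵥ M *ᵥ v‖ ≤ (∑ j, ∑ k, ‖M j k‖) * ‖u‖ * ‖v‖ := by
    simp only [dotProduct, mulVec, Finset.sum_mul]
    refine (norm_sum_le _ _).trans (Finset.sum_le_sum fun j _ => ?_)
    rw [Finset.mul_sum]
    refine (norm_sum_le _ _).trans (Finset.sum_le_sum fun k _ => ?_)
    have h1 := norm_le_pi_norm u j
    have h2 := norm_le_pi_norm v k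
    simp only [Pi.star_apply, norm_mul, norm_star]
    calc ‖u j‖ * (‖M j k‖ * ‖v k‖) ≤ ‖u‖ * (‖M j k‖ * ‖v‖) := by gcongr
      _ = _ := by ring
  refine h.trans ?_
  gcongr
  simp

lemma lower_bound {n : ℕ} (f : (Fin n → ℂ) → ℝ) (hf : Continuous f)
    (hom : ∀ (r : ℝ) v, f ((r : ℂ) • v) = r ^ 2 * f v) (hpos : ∀ v, v ≠ 0 → 0 < f v) :
    ∃ d > 0, ∀ v, d * ‖v‖ ^ 2 ≤ f v := by
  have h00 : f 0 = 0 := by simpa using hom 0 0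
  rcases (Metric.sphere (0 : Fin n → ℂ) 1).eq_empty_or_nonempty with he | hne
  · refine ⟨1, one_pos, fun v => ?_⟩
    by_cases hv : v = 0
    · simp [hv, h00]
    · exfalso
      have : ((‖v‖⁻¹ : ℝ) : ℂ) • v ∈ Metric.sphere (0 : Fin n → ℂ) 1 := by
        simp [norm_smul, hv]
      rw [he] at this; exact this
  · obtain ⟨u, hu, hmin⟩ := (isCompact_sphere (0 : Fin n → ℂ) 1).exists_isMinOn hne hf.continuousOn
    have hu0 : u ≠ 0 := by
      rintro rfl; simp at hu
    refine ⟨f u, hpos u hu0, fun v => ?_⟩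
    by_cases hv : v = 0
    · simp [hv, h00]
    · have hm : ((‖v‖⁻¹ : ℝ) : ℂ) • v ∈ Metric.sphere (0 : Fin n → ℂ) 1 := by
        simp [norm_smul, hv]
      have := hmin hm
      simp only [Set.mem_ofPred_eq, hom] at this
      have hv' : 0 < ‖v‖ := norm_pos_iff.2 hv
      calc f u * ‖v‖ ^ 2 ≤ (‖v‖⁻¹ ^ 2 * f v) * ‖v‖ ^ 2 := by gcongr
        _ = f v := by field_simp

lemma form_deriv {n : ℕ} (M : Matrix (Fin n) (Fin n) ℂ) (hM : M.IsHermitian)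
    (v : ℝ → Fin n → ℂ) (v' : Fin n → ℂ) (t : ℝ) (hv : HasDerivAt v v' t) :
    HasDerivAt (fun s => (star (v s) ⬝ᵥ M *ᵥ v s).re) (2 * (star (v t) ⬝ᵥ M *ᵥ v').re) t := by
  have hc := hasDerivAt_pi.1 hv
  have h1 : HasDerivAt (fun s => star (v s) ⬝ᵥ M *ᵥ v s)
      (star v' ⬝ᵥ M *ᵥ v t + star (v t) ⬝ᵥ M *ᵥ v') t := by
    simp only [dotProduct, mulVec, ← Finset.sum_add_distrib]
    refine HasDerivAt.fun_sum fun j _ => ?_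
    refine HasDerivAt.mul (hc j).star ?_
    exact HasDerivAt.fun_sum fun k _ => (hc k).const_mul _
  have h2 := Complex.reCLM.hasFDerivAt.comp_hasDerivAt t h1
  have e : star v' ⬝ᵥ M *ᵥ v t = star (star (v t) ⬝ᵥ M *ᵥ v') := by
    rw [← star_dotProduct, star_mulVec, hM.eq, dotProduct_mulVec]
  have e3 : 2 * (star (v t) ⬝ᵥ M *ᵥ v').re
      = Complex.reCLM (star v' ⬝ᵥ M *ᵥ v t + star (v t) ⬝ᵥ M *ᵥ v') := by
    rw [e]
    simp
    ring
  rw [e3]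
  exact h2

/-- The scalar differential inequality. -/
lemma scalar_ineq (x y θ ε κ d p N al be : ℝ) (hx : 0 < x) (hy : 0 < y) (hθ : 0 < θ)
    (h1 : θ * x ≤ y) (h2 : θ * y ≤ x) (hε : 0 < ε) (hd : 0 < d) (hN : 0 ≤ N)
    (hεκ : ε * (N + 2 * p ^ 2 / d) ≤ 2 * κ) :
    -2 * y * (κ * be ^ 2) + ε * θ * (-x * (d * al ^ 2 - N * be ^ 2) + 2 * y * (p * al * be))
      ≤ - (ε * (d / 2) * (θ * x)) * al ^ 2 := by
  have k1 : 2 * y * (p * al * be) ≤ x * (d / 2) * al ^ 2 + 2 * p ^ 2 / d * (y ^ 2 / x) * be ^ 2 := by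
    have : x * (d / 2) * al ^ 2 + 2 * p ^ 2 / d * (y ^ 2 / x) * be ^ 2 - 2 * y * (p * al * be)
      = (x * d * al - 2 * p * y * be) ^ 2 / (2 * d * x) := by
      field_simp
      ring
    have : 0 ≤ (x * d * al - 2 * p * y * be) ^ 2 / (2 * d * x) := by positivity
    linarith
  have k2 : θ * (y ^ 2 / x) ≤ y := by
    rw [← mul_div_assoc, div_le_iff₀ hx]; nlinarith
  have k3 : ε * θ * (2 * y * (p * al * be)) ≤
      ε * θ * (x * (d / 2) * al ^ 2 + 2 * p ^ 2 / d * (y ^ 2 / x) * be ^ 2) := by gcongr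
  have k4 : ε * (2 * p ^ 2 / d) * be ^ 2 * (θ * (y ^ 2 / x)) ≤ ε * (2 * p ^ 2 / d) * be ^ 2 * y := by
    gcongr
  have k5 : ε * N * be ^ 2 * (θ * x) ≤ ε * N * be ^ 2 * y := by gcongr
  have k6 : y * be ^ 2 * (ε * (N + 2 * p ^ 2 / d)) ≤ y * be ^ 2 * (2 * κ) := by gcongr
  linarith

lemma gronwall_dec (L L' : ℝ → ℝ) (g : ℝ) (h : ∀ t, 0 ≤ t → HasDerivAt L (L' t) t)
    (hL : ∀ t, 0 ≤ t → L' t ≤ - g * L t) (t : ℝ) (ht : 0 ≤ t) :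
    L t ≤ Real.exp (-g * t) * L 0 := by
  have hd : ∀ s, 0 ≤ s → HasDerivAt (fun s => Real.exp (g * s) * L s)
      (Real.exp (g * s) * (g * 1) * L s + Real.exp (g * s) * L' s) s := fun s hs =>
    (((hasDerivAt_id s).const_mul g).exp).mul (h s hs)
  have hanti : AntitoneOn (fun s => Real.exp (g * s) * L s) (Set.Ici 0) := by
    apply antitoneOn_of_deriv_nonpos (convex_Ici 0)
    · exact fun s hs => (hd s hs).continuousAt.continuousWithinAt
    · intro s hs
      rw [interior_Ici] at hs
      exact (hd s (le_of_lt hs)).differentiableAt.differentiableWithinAt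
    · intro s hs
      rw [interior_Ici] at hs
      rw [(hd s (le_of_lt hs)).deriv]
      have := hL s (le_of_lt hs)
      have h3 := mul_le_mul_of_nonneg_left this (Real.exp_pos (g * s)).le
      linarith
  have := hanti (Set.mem_Ici.2 le_rfl) (Set.mem_Ici.2 ht) ht
  simp only [mul_zero, Real.exp_zero, one_mul] at this
  calc L t = Real.exp (-g * t) * (Real.exp (g * t) * L t) := by
        rw [← mul_assoc, ← Real.exp_add]; simp
    _ ≤ _ := by gcongr

theorem exp_decay_of_SK (n : ℕ) (hn : 1 ≤ n)
    (S A B : Matrix (Fin n) (Fin n) ℂ) (hS : S.PosDef)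
    (hA : ∀ η : Fin n → ℂ, (star η ⬝ᵥ A.mulVec η).re = 0)
    (κ : ℝ) (hκ : 0 < κ)
    (hB : ∀ η : Fin n → ℂ,
      κ * ‖(B.mulVec η : Fin n → ℂ)‖ ^ 2 ≤ (star η ⬝ᵥ B.mulVec η).re)
    (a b : ℝ)
    (hSK : SKCondition (S⁻¹ * A) (S⁻¹ * B)) :
    ∃ c > 0, ∃ C > 0, ∀ ρ > 0, ∀ v v' : ℝ → Fin n → ℂ,
      (∀ t : ℝ, 0 ≤ t → HasDerivAt v (v' t) t) →
      (∀ t : ℝ, 0 ≤ t →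
        S.mulVec (v' t)
          + (((ρ ^ a : ℝ) : ℂ) • A + ((ρ ^ b : ℝ) : ℂ) • B).mulVec (v t) = 0) →
      ∀ t : ℝ, 0 ≤ t →
        ‖(v t : Fin n → ℂ)‖ ≤
          C * Real.exp (-c * t * min (ρ ^ b / κ) (κ * ρ ^ (2 * a - b))) *
            ‖(v 0 : Fin n → ℂ)‖ := by
  obtain ⟨P, hP, hPpos⟩ := sk_comp S A B hS hA hSK
  obtain ⟨e2, he2, hS2⟩ := form_bound S
  obtain ⟨p0, hp0, hP0⟩ := form_bound P
  obtain ⟨p, hp, hPB⟩ := form_bound (P * S⁻¹)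
  obtain ⟨N, hN, h1N⟩ := form_bound (1 : Matrix (Fin n) (Fin n) ℂ)
  obtain ⟨e1, he1, hS1⟩ := lower_bound (fun v => (star v ⬝ᵥ S *ᵥ v).re)
    (by simp only [dotProduct, mulVec]; fun_prop)
    (by intro r v; simp [mulVec_smul, dotProduct_smul, smul_dotProduct, star_smul]; ring)
    (fun v hv => (Complex.lt_def.1 (hS.dotProduct_mulVec_pos hv)).1)
  obtain ⟨d, hd, hd1⟩ := lower_bound
    (fun v => (2 * (star v ⬝ᵥ (P * (S⁻¹ * A)) *ᵥ v) + star (B *ᵥ v) ⬝ᵥ B *ᵥ v).re)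
    (by simp only [dotProduct, mulVec]; fun_prop)
    (by intro r v; simp [mulVec_smul, dotProduct_smul, smul_dotProduct, star_smul]; ring)
    hPpos
  -- constants
  obtain ⟨ε, hε, hεa, hεb, hεc⟩ : ∃ ε > 0, ε * (N + 2 * p ^ 2 / d) ≤ 2 * κ ∧ ε * p0 ≤ e1 / 2 ∧
      ε ≤ 1 := by
    refine ⟨min (min (2 * κ / (N + 2 * p ^ 2 / d)) (e1 / 2 / p0)) 1, by positivity, ?_, ?_, ?_⟩
    · rw [← le_div_iff₀ (by positivity)]
      exact (min_le_left _ _).trans (min_le_left _ _)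
    · rw [← le_div_iff₀ (by positivity)]
      exact (min_le_left _ _).trans (min_le_right _ _)
    · exact min_le_right _ _
  obtain ⟨c2, hc2, hc2e⟩ : ∃ c2 > 0, c2 = e2 + p0 := ⟨_, by positivity, rfl⟩
  obtain ⟨γ, hγ, hγe⟩ : ∃ γ > 0, γ = ε * (d / 2) / c2 := ⟨_, by positivity, rfl⟩
  obtain ⟨K, hK, hK1, hK2⟩ : ∃ K > 0, 1 / κ ≤ K ∧ κ ≤ K :=
    ⟨max (1 / κ) κ, by positivity, le_max_left _ _, le_max_right _ _⟩
  refine ⟨γ / (2 * K), by positivity, Real.sqrt (2 * c2 / e1), by positivity, ?_⟩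
  intro ρ hρ v v' hv hode t ht
  obtain ⟨x, hx, hxe⟩ : ∃ x > 0, x = ρ ^ a := ⟨_, by positivity, rfl⟩
  obtain ⟨y, hy, hye⟩ : ∃ y > 0, y = ρ ^ b := ⟨_, by positivity, rfl⟩
  have hxy : ρ ^ (2 * a - b) = x ^ 2 / y := by
    rw [Real.rpow_sub hρ, hxe, hye, mul_comm 2 a, Real.rpow_mul hρ.le]; norm_num
  rw [hxy, ← hye]
  rw [← hxe, ← hye] at hode
  obtain ⟨θ, hθe⟩ : ∃ θ, θ = min (y / x) (x / y) := ⟨_, rfl⟩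
  have hθ : 0 < θ := by rw [hθe]; positivity
  have hθ1 : θ * x ≤ y := by
    rw [← le_div_iff₀ hx, hθe]; exact min_le_left _ _
  have hθ2 : θ * y ≤ x := by
    rw [← le_div_iff₀ hy, hθe]; exact min_le_right _ _
  have hθ3 : θ ≤ 1 := by
    by_contra hcon
    push Not at hcon
    nlinarith
  have hm : min (y / κ) (κ * (x ^ 2 / y)) ≤ K * (θ * x) := by
    have : θ * x = min y (x ^ 2 / y) := by
      rw [hθe, min_mul_of_nonneg _ _ hx.le]
      congr 1
      · field_simp
      · field_simp
    rw [this, mul_min_of_nonneg _ _ hK.le]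
    apply min_le_min
    · rw [div_eq_mul_one_div, mul_comm]; gcongr
    · gcongr
  -- Lyapunov functional
  have hSd := (Matrix.isUnit_iff_isUnit_det _).1 hS.isUnit
  have hode' : ∀ s, 0 ≤ s → S *ᵥ v' s = -((x : ℂ) • A *ᵥ v s + (y : ℂ) • B *ᵥ v s) := by
    intro s hs
    have := hode s hs
    rw [add_mulVec, smul_mulVec, smul_mulVec] at this
    exact eq_neg_of_add_eq_zero_left this
  have hv'e : ∀ s, 0 ≤ s → v' s = -((x : ℂ) • (S⁻¹ * A) *ᵥ v s + (y : ℂ) • (S⁻¹ * B) *ᵥ v s) := by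
    intro s hs
    have h1 : S⁻¹ *ᵥ (S *ᵥ v' s) = v' s := by
      rw [mulVec_mulVec, nonsing_inv_mul _ hSd, one_mulVec]
    rw [← h1, hode' s hs, mulVec_neg, mulVec_add, mulVec_smul, mulVec_smul, mulVec_mulVec,
      mulVec_mulVec]
  have hlow : ∀ s, e1 / 2 * ‖v s‖ ^ 2 ≤
      (star (v s) ⬝ᵥ S *ᵥ v s).re + ε * θ * (star (v s) ⬝ᵥ P *ᵥ v s).re := by
    intro s
    have h1 := hS1 (v s)
    have h2 := (abs_le.1 (hP0 (v s) (v s))).1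
    have h3 : ε * θ * (-(p0 * ‖v s‖ * ‖v s‖)) ≤ ε * θ * (star (v s) ⬝ᵥ P *ᵥ v s).re := by gcongr
    have h4 : θ * ((ε * p0) * ‖v s‖ ^ 2) ≤ 1 * ((e1 / 2) * ‖v s‖ ^ 2) := by gcongr
    linarith
  have hupp : ∀ s, (star (v s) ⬝ᵥ S *ᵥ v s).re + ε * θ * (star (v s) ⬝ᵥ P *ᵥ v s).re
      ≤ c2 * ‖v s‖ ^ 2 := by
    intro s
    have h1 := (abs_le.1 (hS2 (v s) (v s))).2
    have h2 := (abs_le.1 (hP0 (v s) (v s))).2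
    have h3 : ε * θ * (star (v s) ⬝ᵥ P *ᵥ v s).re ≤ ε * θ * (p0 * ‖v s‖ * ‖v s‖) := by gcongr
    have h4 : ε * θ * (p0 * ‖v s‖ * ‖v s‖) ≤ 1 * 1 * (p0 * ‖v s‖ * ‖v s‖) := by gcongr
    rw [hc2e]
    linarith
  have hgr := gronwall_dec
    (fun s => (star (v s) ⬝ᵥ S *ᵥ v s).re + ε * θ * (star (v s) ⬝ᵥ P *ᵥ v s).re)
    (fun s => 2 * (star (v s) ⬝ᵥ S *ᵥ v' s).re + ε * θ * (2 * (star (v s) ⬝ᵥ P *ᵥ v' s).re))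
    (γ * (θ * x))
    (fun s hs => (form_deriv S hS.isHermitian v _ s (hv s hs)).add
      ((form_deriv P hP v _ s (hv s hs)).const_mul _))
    (by
      intro s hs
      have hb := hB (v s)
      have hS' : (star (v s) ⬝ᵥ S *ᵥ v' s).re = - (y * (star (v s) ⬝ᵥ B *ᵥ v s).re) := by
        rw [hode' s hs]
        simp [dotProduct_add, dotProduct_smul, hA]
      have hP' : (star (v s) ⬝ᵥ P *ᵥ v' s).re =
          - (x * (star (v s) ⬝ᵥ (P * (S⁻¹ * A)) *ᵥ v s).re)
          - y * (star (v s) ⬝ᵥ (P * S⁻¹) *ᵥ (B *ᵥ v s)).re := by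
        rw [hv'e s hs, mulVec_neg, mulVec_add, mulVec_smul, mulVec_smul, mulVec_mulVec,
          mulVec_mulVec, mulVec_mulVec, Matrix.mul_assoc P]
        simp [dotProduct_add, dotProduct_smul]
        ring
      have h1 := (abs_le.1 (hPB (v s) (B *ᵥ v s))).1
      have h2 := hd1 (v s)
      have h3 := (abs_le.1 (h1N (B *ᵥ v s) (B *ᵥ v s))).2
      rw [one_mulVec] at h3
      simp only [Complex.add_re, Complex.mul_re, Complex.re_ofNat, Complex.im_ofNat, zero_mul,
        sub_zero] at h2
      have hsc := scalar_ineq x y θ ε κ d p N ‖v s‖ ‖B *ᵥ v s‖ hx hy hθ hθ1 hθ2 hε hd hN.le hεa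
      have hu := hupp s
      have hu2 : γ * (θ * x) * ((star (v s) ⬝ᵥ S *ᵥ v s).re
          + ε * θ * (star (v s) ⬝ᵥ P *ᵥ v s).re) ≤ γ * (θ * x) * (c2 * ‖v s‖ ^ 2) := by gcongr
      have hγ2 : γ * (θ * x) * (c2 * ‖v s‖ ^ 2) = (ε * (d / 2) * (θ * x)) * ‖v s‖ ^ 2 := by
        rw [hγe]; field_simp
      have q1 : y * (κ * ‖B *ᵥ v s‖ ^ 2) ≤ y * (star (v s) ⬝ᵥ B *ᵥ v s).re := by gcongr
      have q2 : 2 * (star (v s) ⬝ᵥ P *ᵥ v' s).re ≤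
          -x * (d * ‖v s‖ ^ 2 - N * ‖B *ᵥ v s‖ ^ 2) + 2 * y * (p * ‖v s‖ * ‖B *ᵥ v s‖) := by
        rw [hP']
        have r1 := mul_le_mul_of_nonneg_left h1 hy.le
        have r2 : x * (d * ‖v s‖ ^ 2 - N * ‖B *ᵥ v s‖ ^ 2) ≤
          x * (2 * (star (v s) ⬝ᵥ (P * (S⁻¹ * A)) *ᵥ v s).re) := by
          gcongr
          linarith
        linarith
      have q3 : ε * θ * (2 * (star (v s) ⬝ᵥ P *ᵥ v' s).re) ≤ ε * θ *
          (-x * (d * ‖v s‖ ^ 2 - N * ‖B *ᵥ v s‖ ^ 2) + 2 * y * (p * ‖v s‖ * ‖B *ᵥ v s‖)) := by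
        gcongr
      rw [hS']
      linarith) t ht
  have hfin : ‖v t‖ ^ 2 ≤ (Real.sqrt (2 * c2 / e1) *
      Real.exp (-(γ / (2 * K)) * t * min (y / κ) (κ * (x ^ 2 / y))) * ‖v 0‖) ^ 2 := by
    rw [mul_pow, mul_pow, Real.sq_sqrt (by positivity), ← Real.exp_nat_mul]
    have h1 := hlow t
    have h2 := hupp 0
    have h3 : Real.exp (-(γ * (θ * x)) * t) ≤
        Real.exp (((2 : ℕ) : ℝ) * (-(γ / (2 * K)) * t * min (y / κ) (κ * (x ^ 2 / y)))) := by
      apply Real.exp_le_exp.2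
      have : γ / K * t * min (y / κ) (κ * (x ^ 2 / y)) ≤ γ / K * t * (K * (θ * x)) := by gcongr
      have e : γ / K * t * (K * (θ * x)) = γ * (θ * x) * t := by field_simp
      have e' : ((2 : ℕ) : ℝ) * (-(γ / (2 * K)) * t * min (y / κ) (κ * (x ^ 2 / y)))
        = -(γ / K * t * min (y / κ) (κ * (x ^ 2 / y))) := by
        push_cast; field_simp
      rw [e']
      linarith
    have h4 : e1 / 2 * ‖v t‖ ^ 2 ≤ Real.exp (((2 : ℕ) : ℝ) *
        (-(γ / (2 * K)) * t * min (y / κ) (κ * (x ^ 2 / y)))) * (c2 * ‖v 0‖ ^ 2) := by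
      refine h1.trans (hgr.trans ?_)
      exact (mul_le_mul_of_nonneg_left h2 (Real.exp_pos _).le).trans
        (mul_le_mul_of_nonneg_right h3 (by positivity))
    calc ‖v t‖ ^ 2 = 2 / e1 * (e1 / 2 * ‖v t‖ ^ 2) := by field_simp
      _ ≤ 2 / e1 * _ := mul_le_mul_of_nonneg_left h4 (by positivity)
      _ = _ := by ring
  exact le_of_sq_le_sq hfin (by positivity)
end

section
/- Let n ≥ 1, d ≥ 1, and let ω ↦ N_ω and ω ↦ M_ω be continuous maps from the unit sphere S^{d-1} = {ω ∈ ℝᵈ : |ω| = 1} to the space of n×n complex matrices, such that for every ω ∈ S^{d-1} the pair (N_ω, M_ω) satisfies the (SK) condition. Then for every choice of positive real numbers ε₀, …, ε_{n-1} there exists a constant c > 0 such that ∑_{k=0}^{n-1} ε_k |M_ω N_ω^{k} η|² ≥ c for every ω ∈ S^{d-1} and every η ∈ ℂⁿ with |η| = 1. -/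
open Matrix

open Polynomial in
theorem SK_aux {n : ℕ} (N M : Matrix (Fin n) (Fin n) ℂ) (h : SKCondition N M)
    (η : Fin n → ℂ) (hη : ∀ k < n, (M * N ^ k).mulVec η = 0) :
    ∀ k ≤ n, ∀ p : ℂ[X], p.Monic → p.natDegree = k →
      (aeval N p).mulVec η = 0 → η = 0 := by
  intro k
  induction k with
  | zero =>
    intro _ p hp hd h0
    rw [(Polynomial.Monic.natDegree_eq_zero hp).mp hd] at h0
    simpa using h0
  | succ k ih =>
    intro hk p hp hd h0
    obtain ⟨z, hz⟩ := IsAlgClosed.exists_root p (by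
      intro h'
      have := natDegree_eq_of_degree_eq_some (n := 0) h'
      omega)
    obtain ⟨q, rfl⟩ := dvd_iff_isRoot.mpr hz
    have hq : q.Monic := (monic_X_sub_C z).of_mul_monic_left hp
    have hqd : q.natDegree = k := by
      rw [(monic_X_sub_C z).natDegree_mul hq, natDegree_X_sub_C] at hd
      omega
    refine ih (by omega) q hq hqd ?_
    refine h _ (-z) ?_ ?_
    · rw [Matrix.mulVec_mulVec, aeval_eq_sum_range, Finset.mul_sum, Matrix.sum_mulVec]
      refine Finset.sum_eq_zero fun i hi => ?_
      rw [Matrix.mul_smul, Matrix.smul_mulVec, hη i (by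
        have := Finset.mem_range.mp hi
        omega), smul_zero]
    · rw [map_mul, ← Matrix.mulVec_mulVec] at h0
      simp only [map_sub, aeval_X, aeval_C, Matrix.sub_mulVec, Algebra.algebraMap_eq_smul_one,
        Matrix.smul_mulVec, Matrix.one_mulVec] at h0
      rw [neg_smul, neg_add_eq_sub]
      exact h0

theorem uniform_lower_bound_of_SK_on_sphere (n d : ℕ) (hn : 1 ≤ n) (hd : 1 ≤ d)
    (N M : EuclideanSpace ℝ (Fin d) → Matrix (Fin n) (Fin n) ℂ)
    (hNcont : ContinuousOn N (Metric.sphere (0 : EuclideanSpace ℝ (Fin d)) 1))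
    (hMcont : ContinuousOn M (Metric.sphere (0 : EuclideanSpace ℝ (Fin d)) 1))
    (hSK : ∀ ω ∈ Metric.sphere (0 : EuclideanSpace ℝ (Fin d)) 1,
      SKCondition (N ω) (M ω)) :
    ∀ ε : ℕ → ℝ, (∀ k < n, 0 < ε k) →
      ∃ c > 0, ∀ ω ∈ Metric.sphere (0 : EuclideanSpace ℝ (Fin d)) 1,
        ∀ η : EuclideanSpace ℂ (Fin n), ‖η‖ = 1 →
          c ≤ ∑ k ∈ Finset.range n,
              ε k * ‖((M ω * N ω ^ k).mulVec η : Fin n → ℂ)‖ ^ 2 := by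
  intro ε hε
  have hc : IsCompact ((Metric.sphere (0 : EuclideanSpace ℝ (Fin d)) 1) ×ˢ
      (Metric.sphere (0 : EuclideanSpace ℂ (Fin n)) 1)) :=
    (isCompact_sphere _ _).prod (isCompact_sphere _ _)
  have hf : ContinuousOn (fun x : EuclideanSpace ℝ (Fin d) × EuclideanSpace ℂ (Fin n) =>
      ∑ k ∈ Finset.range n,
        ε k * ‖((M x.1 * N x.1 ^ k).mulVec x.2 : Fin n → ℂ)‖ ^ 2)
      ((Metric.sphere (0 : EuclideanSpace ℝ (Fin d)) 1) ×ˢ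
      (Metric.sphere (0 : EuclideanSpace ℂ (Fin n)) 1)) := by
    have hN := hNcont.comp (continuousOn_fst (s := (Metric.sphere (0 : EuclideanSpace ℝ (Fin d)) 1) ×ˢ
      (Metric.sphere (0 : EuclideanSpace ℂ (Fin n)) 1))) (fun x hx => hx.1)
    have hM := hMcont.comp (continuousOn_fst (s := (Metric.sphere (0 : EuclideanSpace ℝ (Fin d)) 1) ×ˢ
      (Metric.sphere (0 : EuclideanSpace ℂ (Fin n)) 1))) (fun x hx => hx.1)
    refine continuousOn_finsetSum _ fun k _ => continuousOn_const.mul (ContinuousOn.pow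
      (ContinuousOn.norm ?_) 2)
    have h1 : ContinuousOn (fun x : EuclideanSpace ℝ (Fin d) × EuclideanSpace ℂ (Fin n) =>
        M x.1 * N x.1 ^ k) ((Metric.sphere (0 : EuclideanSpace ℝ (Fin d)) 1) ×ˢ
      (Metric.sphere (0 : EuclideanSpace ℂ (Fin n)) 1)) := hM.mul (hN.pow k)
    have h3 : Continuous fun x : EuclideanSpace ℝ (Fin d) × EuclideanSpace ℂ (Fin n) =>
      (x.2 : Fin n → ℂ) := by fun_prop
    rw [continuousOn_iff_continuous_restrict] at h1 ⊢
    exact Continuous.matrix_mulVec h1 (h3.comp continuous_subtype_val)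
  obtain ⟨c, hc0, hcl⟩ := hc.exists_forall_le' hf (a := 0) (by
    rintro ⟨ω, η⟩ ⟨hω, hη⟩
    have hnn : ∀ k ∈ Finset.range n,
        0 ≤ ε k * ‖((M ω * N ω ^ k).mulVec η : Fin n → ℂ)‖ ^ 2 := fun k hk =>
      mul_nonneg (hε k (Finset.mem_range.mp hk)).le (sq_nonneg _)
    refine lt_of_le_of_ne (Finset.sum_nonneg hnn) fun h0 => ?_
    have hz := (Finset.sum_eq_zero_iff_of_nonneg hnn).mp h0.symm
    have hη0 := SK_aux (N ω) (M ω) (hSK ω hω) η (fun k hk => by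
      have := hz k (Finset.mem_range.mpr hk)
      simpa [(hε k hk).ne'] using this) n le_rfl (N ω).charpoly
      (Matrix.charpoly_monic _) (by simp [Matrix.charpoly_natDegree_eq_dim])
      (by rw [Matrix.aeval_self_charpoly, Matrix.zero_mulVec])
    have hη' : η = 0 := by
      ext i
      exact congrFun hη0 i
    simp [hη'] at hη)
  exact ⟨c, hc0, fun ω hω η hη => hcl (ω, η) ⟨hω, by simpa using hη⟩⟩
end
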